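/- For the family 𝔤₆(z₁, z₂, z₃, r, θ₁, θ₂) with z₁ ≠ 0 and z₃ ≠ 0, the structure J is integrable, i.e. the Nijenhuis tensor N(E,F) = 0 for all E, F ∈ 𝔤, if and only if r = (z₁² + z₃²)/z₃ and z₂ = (z₁² − z₃²)/(2z₃). -/

import Mathlib

noncomputable section

/-- The bilinear antisymmetric bracket on ℝ⁴ determined by the structure constants. -/
def bk (z₁ z₂ z₃ r θ₁ θ₂ : ℝ) (E F : Fin 4 → ℝ) : Fin 4 → ℝ :=
  (E 0 * F 1 - E 1 * F 0) • (![-r, 0, -θ₁, -θ₂] : Fin 4 → ℝ) +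
  (E 0 * F 2 - E 2 * F 0) • (![0, 0, -z₁, z₁ ^ 2 / z₃] : Fin 4 → ℝ) +
  (E 0 * F 3 - E 3 * F 0) • (![0, 0, -z₃, z₁] : Fin 4 → ℝ) +
  (E 1 * F 2 - E 2 * F 1) • (![0, 0, -z₂, -(z₁ * (r - 2 * z₂) / (2 * z₃))] : Fin 4 → ℝ) +
  (E 1 * F 3 - E 3 * F 1) • (![0, 0, -(z₃ * (r + 2 * z₂) / (2 * z₁)), z₂] : Fin 4 → ℝ) +
  (E 2 * F 3 - E 3 * F 2) • (![0, 0, 0, 0] : Fin 4 → ℝ)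

/-- The almost Hermitian structure J with J(X)=Y, J(Y)=-X, J(Z)=W, J(W)=-Z. -/
def Jm (E : Fin 4 → ℝ) : Fin 4 → ℝ := ![-E 1, E 0, -E 3, E 2]

/-- The Nijenhuis tensor of J. -/
def NT (z₁ z₂ z₃ r θ₁ θ₂ : ℝ) (E F : Fin 4 → ℝ) : Fin 4 → ℝ :=
  bk z₁ z₂ z₃ r θ₁ θ₂ E F + Jm (bk z₁ z₂ z₃ r θ₁ θ₂ (Jm E) F) + Jm (bk z₁ z₂ z₃ r θ₁ θ₂ E (Jm F)) -
    bk z₁ z₂ z₃ r θ₁ θ₂ (Jm E) (Jm F)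

theorem g6_integrable_iff (z₁ z₂ z₃ r θ₁ θ₂ : ℝ) (h1 : z₁ ≠ 0) (h3 : z₃ ≠ 0) :
    (∀ E F : Fin 4 → ℝ, NT z₁ z₂ z₃ r θ₁ θ₂ E F = 0) ↔
    (r = (z₁ ^ 2 + z₃ ^ 2) / z₃ ∧ z₂ = (z₁ ^ 2 - z₃ ^ 2) / (2 * z₃)) := by
  constructor
  · intro h
    have h0 := h ![1, 0, 0, 0] ![0, 0, 1, 0]
    have hZ := congrFun h0 2
    have hW := congrFun h0 3
    simp [NT, bk, Jm] at hZ hW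
    have e2 : z₂ = (z₁ ^ 2 - z₃ ^ 2) / (2 * z₃) := by
      field_simp at hW ⊢
      linarith
    refine ⟨?_, e2⟩
    have hp : z₁ ^ 2 + z₃ ^ 2 ≠ 0 := by positivity
    rw [e2] at hZ
    field_simp at hZ ⊢
    apply mul_left_cancel₀ hp
    linarith
  · rintro ⟨hr, h2⟩ E F
    subst hr h2
    ext i
    fin_cases i <;> simp [NT, bk, Jm] <;> field_simp <;> ring

end
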